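/- Let N ∈ {3,4,5} and let ℓ ∈ ℝ with ℓ² > 1. Let f : ℝ^N → ℝ be twice continuously differentiable with ∇f ∈ L²(ℝ^N) and f ∈ L^{2N/(N−2)}(ℝ^N), satisfying pointwise (1−ℓ²)∂²_{x₁}f + Σ_{j=2}^N ∂²_{x_j}f + |f|^{4/(N−2)} f = 0 on ℝ^N. Then f is identically zero. -/

import Mathlib

open MeasureTheory Metric Filter Set

noncomputable section

/-- The ground state `W(x) = (1 + |x|²/(N(N-2)))^(-(N-2)/2)`. -/
def W (N : ℕ) (x : EuclideanSpace ℝ (Fin N)) : ℝ :=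
  (1 + ‖x‖ ^ 2 / ((N : ℝ) * ((N : ℝ) - 2))) ^ (-(((N : ℝ) - 2) / 2))

/-- The energy `E(v₀,v₁)`. -/
def energy (N : ℕ) (v₀ v₁ : EuclideanSpace ℝ (Fin N) → ℝ) : ℝ :=
  (1 / 2) * (∫ x, v₁ x ^ 2)
    + (1 / 2) * (∫ x, ‖gradient v₀ x‖ ^ 2)
    - ((N : ℝ) - 2) / (2 * (N : ℝ)) * (∫ x, |v₀ x| ^ (2 * (N : ℝ) / ((N : ℝ) - 2)))

/-- The first coordinate of a point of `ℝ^N`. -/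
def firstCoord {N : ℕ} (x : EuclideanSpace ℝ (Fin N)) : ℝ :=
  if h : 0 < N then x ⟨0, h⟩ else 0

/-- The Lorentz-transformed ground state `W_ℓ(t,x)`; the sum `x₂² + ⋯ + x_N²` is written
as `‖x‖² - x₁²`. -/
def Wl (N : ℕ) (ℓ : ℝ) (t : ℝ) (x : EuclideanSpace ℝ (Fin N)) : ℝ :=
  (1 + (firstCoord x - t * ℓ) ^ 2 / ((N : ℝ) * ((N : ℝ) - 2) * (1 - ℓ ^ 2))
     + (‖x‖ ^ 2 - firstCoord x ^ 2) / ((N : ℝ) * ((N : ℝ) - 2))) ^ (-(((N : ℝ) - 2) / 2))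

/-- The time derivative `∂ₜ W_ℓ(t,x)`. -/
def dtWl (N : ℕ) (ℓ : ℝ) (t : ℝ) (x : EuclideanSpace ℝ (Fin N)) : ℝ :=
  deriv (fun s => Wl N ℓ s x) t

/-- The second partial derivative `∂²f/∂xⱼ²` at `x`. -/
def d2 {N : ℕ} (f : EuclideanSpace ℝ (Fin N) → ℝ) (j : Fin N)
    (x : EuclideanSpace ℝ (Fin N)) : ℝ :=
  fderiv ℝ (fun y => fderiv ℝ f y (EuclideanSpace.single j 1)) x (EuclideanSpace.single j 1)

/-!
For a constant symmetric operator `A`, the equation `div (A ∇f) + G'(f) = 0` is variational and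
invariant under translations, so each vector `v` yields a divergence-free Noether current
`T_v = ⟪∇f, v⟫ A ∇f - L v`, where `L = ⟪A ∇f, ∇f⟫ / 2 - G(f)`. Integrable divergence-free fields
have zero integral, and pairing `∫ T_{Aw} = 0` with `w` gives `∫ ⟪∇f, A w⟫² = ⟪A w, w⟫ ∫ L` for
every `w`. The left-hand side is nonnegative, while for a velocity `β` with `‖β‖ > 1` the wave
operator `A = id - β ⊗ β` is indefinite; this forces `∫ L = 0`. Hence `A ∇f = 0`, so `f` is
constant, and since `G(f)` is integrable over a space of infinite volume, `G(f) = 0`.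
-/

section Divergence

open Topology

variable {E : Type*} [NormedAddCommGroup E] [NormedSpace ℝ E]

/-- The divergence of the vector field `T` at `x`, as the trace of its derivative, so that no basis
is singled out. It is `0` where `T` is not differentiable. -/
def divergence (T : E → E) (x : E) : ℝ :=
  LinearMap.trace ℝ E (fderiv ℝ T x)

lemma divergence_sub {S T : E → E} {x : E} (hS : DifferentiableAt ℝ S x)
    (hT : DifferentiableAt ℝ T x) :
    divergence (fun y ↦ S y - T y) x = divergence S x - divergence T x := by
  simp only [divergence, fderiv_fun_sub hS hT, ContinuousLinearMap.toLinearMap_sub, map_sub]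

variable [FiniteDimensional ℝ E]

lemma divergence_smul {c : E → ℝ} {T : E → E} {x : E} (hc : DifferentiableAt ℝ c x)
    (hT : DifferentiableAt ℝ T x) :
    divergence (fun y ↦ c y • T y) x = c x * divergence T x + fderiv ℝ c x (T x) := by
  simp only [divergence, fderiv_fun_smul hc hT, ContinuousLinearMap.toLinearMap_add, map_add,
    ContinuousLinearMap.toLinearMap_smul, map_smul, smul_eq_mul]
  congr 1
  exact LinearMap.trace_smulRight _ _

lemma exists_contDiff_hasCompactSupport_fderiv_zero_eq (L : E →L[ℝ] ℝ) :
    ∃ ψ : E → ℝ, ContDiff ℝ 1 ψ ∧ HasCompactSupport ψ ∧ fderiv ℝ ψ 0 = L := by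
  let χ : ContDiffBump (0 : E) := ⟨1, 2, one_pos, one_lt_two⟩
  refine ⟨fun y ↦ L y * χ y, L.contDiff.mul χ.contDiff, χ.hasCompactSupport.mul_left, ?_⟩
  have hψ : (fun y ↦ L y * χ y) =ᶠ[𝓝 0] L := by
    filter_upwards [χ.eventuallyEq_one] with y hy
    simp [hy]
  rw [hψ.fderiv_eq, L.fderiv]

variable [MeasurableSpace E] [BorelSpace E] {μ : Measure E} [μ.IsAddHaarMeasure]

lemma integral_fderiv_eq_zero_of_hasCompactSupport {F : Type*} [NormedAddCommGroup F]
    [NormedSpace ℝ F] {S : E → F} (hS : ContDiff ℝ 1 S) (hSc : HasCompactSupport S) :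
    ∫ x, fderiv ℝ S x ∂μ = 0 := by
  have hS_int : Integrable S μ := hS.continuous.integrable_of_hasCompactSupport hSc
  have hDS_int : Integrable (fderiv ℝ S) μ :=
    (hS.continuous_fderiv one_ne_zero).integrable_of_hasCompactSupport (hSc.fderiv ℝ)
  ext v
  rw [ContinuousLinearMap.integral_apply hDS_int]
  simpa using integral_smul_fderiv_eq_neg_fderiv_smul_of_integrable (𝕜 := ℝ) (μ := μ)
    (f := fun _ ↦ (1 : ℝ)) (g := S) (v := v) (by simp)
    (by simpa using hDS_int.apply_continuousLinearMap v)
    (by simpa using hS_int) (fun _ _ ↦ differentiableAt_const _)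
    (fun x _ ↦ hS.differentiable one_ne_zero x)

lemma integral_divergence_eq_zero_of_hasCompactSupport {S : E → E} (hS : ContDiff ℝ 1 S)
    (hSc : HasCompactSupport S) : ∫ x, divergence S x ∂μ = 0 := by
  let trace : (E →L[ℝ] E) →L[ℝ] ℝ :=
    (LinearMap.trace ℝ E ∘ₗ ContinuousLinearMap.coeLM ℝ).toContinuousLinearMap
  have hDS : Integrable (fderiv ℝ S) μ :=
    (hS.continuous_fderiv one_ne_zero).integrable_of_hasCompactSupport (hSc.fderiv ℝ)
  calc ∫ x, divergence S x ∂μ = trace (∫ x, fderiv ℝ S x ∂μ) := trace.integral_comp_comm hDS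
    _ = 0 := by rw [integral_fderiv_eq_zero_of_hasCompactSupport hS hSc, map_zero]

lemma integral_fderiv_apply_eq_zero {φ : E → ℝ} {T : E → E} (hφ : ContDiff ℝ 1 φ)
    (hφc : HasCompactSupport φ) (hT : ContDiff ℝ 1 T) (hdiv : ∀ x, divergence T x = 0) :
    ∫ x, fderiv ℝ φ x (T x) ∂μ = 0 := by
  rw [← integral_divergence_eq_zero_of_hasCompactSupport (μ := μ) (hφ.smul hT) hφc.smul_right]
  congr with x
  rw [show (φ • T) = fun y ↦ φ y • T y from rfl,
    divergence_smul (hφ.differentiable one_ne_zero x) (hT.differentiable one_ne_zero x), hdiv,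
    mul_zero, zero_add]

lemma integral_fderiv_smul_apply_eq_zero {ψ : E → ℝ} {T : E → E} (hψ : ContDiff ℝ 1 ψ)
    (hψc : HasCompactSupport ψ) (hT : ContDiff ℝ 1 T) (hdiv : ∀ x, divergence T x = 0) {c : ℝ}
    (hc : c ≠ 0) : ∫ x, fderiv ℝ ψ (c • x) (T x) ∂μ = 0 := by
  have h := integral_fderiv_apply_eq_zero (μ := μ) (φ := fun x ↦ ψ (c • x))
    (hψ.comp (contDiff_const_smul c)) (hψc.comp_smul hc) hT hdiv
  simpa only [fderiv_comp_smul, smul_apply, integral_smul, smul_eq_zero, hc, false_or] using h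

/- Testing against `ψ (c • x) / c`, which approximates the linear functional `L = ψ'(0)` as
`c → 0`, gives `∫ ψ'(c • x) (T x) = 0`, and this converges to `∫ L (T x)`. -/
theorem integral_eq_zero_of_divergence_eq_zero {T : E → E} (hT : ContDiff ℝ 1 T)
    (hT_int : Integrable T μ) (hdiv : ∀ x, divergence T x = 0) : ∫ x, T x ∂μ = 0 := by
  refine SeparatingDual.eq_zero_of_forall_dual_eq_zero (R := ℝ) fun L ↦ ?_
  obtain ⟨ψ, hψ, hψc, hψ0⟩ := exists_contDiff_hasCompactSupport_fderiv_zero_eq L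
  have hψ' : Continuous (fderiv ℝ ψ) := hψ.continuous_fderiv one_ne_zero
  obtain ⟨C, hC⟩ := (hψc.fderiv ℝ).exists_bound_of_continuous hψ'
  have scaled_eq_zero (n : ℕ) : ∫ x, fderiv ℝ ψ ((1 / ((n : ℝ) + 1)) • x) (T x) ∂μ = 0 :=
    integral_fderiv_smul_apply_eq_zero hψ hψc hT hdiv (by positivity)
  have tendsto_scaled : Tendsto (fun n : ℕ ↦ ∫ x, fderiv ℝ ψ ((1 / ((n : ℝ) + 1)) • x) (T x) ∂μ)
      atTop (𝓝 (∫ x, L (T x) ∂μ)) := by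
    refine tendsto_integral_of_dominated_convergence (fun x ↦ C * ‖T x‖) (fun n ↦ ?_)
      (hT_int.norm.const_mul C) (fun n ↦ .of_forall fun x ↦ ?_) (.of_forall fun x ↦ ?_)
    · exact ((hψ'.comp (continuous_const_smul _)).clm_apply hT.continuous).aestronglyMeasurable
    · exact ((fderiv ℝ ψ _).le_opNorm _).trans (by gcongr; exact hC _)
    · have h_smul : Tendsto (fun n : ℕ ↦ (1 / ((n : ℝ) + 1)) • x) atTop (𝓝 0) := by
        simpa using (tendsto_one_div_add_atTop_nhds_zero_nat (𝕜 := ℝ)).smul_const x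
      have h_eval : Continuous fun y ↦ fderiv ℝ ψ y (T x) := hψ'.clm_apply continuous_const
      exact hψ0 ▸ (h_eval.tendsto 0).comp h_smul
  rw [← L.integral_comp_comm hT_int]
  exact tendsto_nhds_unique tendsto_scaled (by simp only [scaled_eq_zero, tendsto_const_nhds])

end Divergence

section Pohozaev

open scoped Gradient RealInnerProductSpace

variable {E : Type*} [NormedAddCommGroup E] [InnerProductSpace ℝ E] [FiniteDimensional ℝ E]
  {f : E → ℝ}

lemma contDiff_gradient {n : WithTop ℕ∞} (hf : ContDiff ℝ (n + 1) f) : ContDiff ℝ n (∇ f) :=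
  (InnerProductSpace.toDual ℝ E).symm.toContinuousLinearEquiv.contDiff.comp (hf.fderiv_right le_rfl)

lemma inner_fderiv_gradient (hf : ContDiff ℝ 2 f) (x v w : E) :
    ⟪fderiv ℝ (∇ f) x v, w⟫ = fderiv ℝ (fun y ↦ fderiv ℝ f y w) x v := by
  have hgrad : DifferentiableAt ℝ (∇ f) x :=
    (contDiff_gradient (n := 1) hf).differentiable one_ne_zero x
  have hw : (fun y ↦ fderiv ℝ f y w) = fun y ↦ ⟪∇ f y, w⟫ := by
    ext y
    rw [inner_gradient_left]
  rw [hw, fderiv_inner_apply ℝ hgrad (differentiableAt_const w)]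
  simp

lemma inner_fderiv_gradient_comm (hf : ContDiff ℝ 2 f) (x v w : E) :
    ⟪fderiv ℝ (∇ f) x v, w⟫ = ⟪fderiv ℝ (∇ f) x w, v⟫ := by
  have hDf : DifferentiableAt ℝ (fderiv ℝ f) x :=
    (hf.fderiv_right (m := 1) le_rfl).differentiable one_ne_zero x
  have inner_eq (v w : E) : ⟪fderiv ℝ (∇ f) x v, w⟫ = fderiv ℝ (fderiv ℝ f) x v w := by
    rw [inner_fderiv_gradient hf, fderiv_clm_apply hDf (differentiableAt_const w)]
    simp
  rw [inner_eq, inner_eq]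
  exact (hf.contDiffAt.isSymmSndFDerivAt (by simp)).eq v w

/-- The Lagrangian density `⟪A ∇f, ∇f⟫ / 2 - G(f)`, whose Euler–Lagrange equation for symmetric `A`
is `div (A ∇f) + G'(f) = 0`. -/
def lagrangian (A : E →L[ℝ] E) (G : ℝ → ℝ) (f : E → ℝ) (x : E) : ℝ :=
  ⟪A (∇ f x), ∇ f x⟫ / 2 - G (f x)

/-- The Noether current attached to translations in the direction `v`: the energy–momentum tensor
of the Lagrangian, contracted with `v`. -/
def stressTensor (A : E →L[ℝ] E) (G : ℝ → ℝ) (f : E → ℝ) (v x : E) : E :=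
  ⟪∇ f x, v⟫ • A (∇ f x) - lagrangian A G f x • v

variable {A : E →L[ℝ] E} {G : ℝ → ℝ}

lemma contDiff_lagrangian (A : E →L[ℝ] E) (hG : ContDiff ℝ 1 G) (hf : ContDiff ℝ 2 f) :
    ContDiff ℝ 1 (lagrangian A G f) := by
  have hgrad : ContDiff ℝ 1 (∇ f) := contDiff_gradient hf
  exact (((A.contDiff.comp hgrad).inner ℝ hgrad).div_const 2).sub
    (hG.comp (hf.of_le one_le_two))

lemma contDiff_stressTensor (A : E →L[ℝ] E) (hG : ContDiff ℝ 1 G) (hf : ContDiff ℝ 2 f) (v : E) :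
    ContDiff ℝ 1 (stressTensor A G f v) := by
  have hgrad : ContDiff ℝ 1 (∇ f) := contDiff_gradient hf
  exact ((hgrad.inner ℝ contDiff_const).smul (A.contDiff.comp hgrad)).sub
    ((contDiff_lagrangian A hG hf).smul contDiff_const)

lemma fderiv_lagrangian_apply (hA : A.toLinearMap.IsSymmetric) (hG : ContDiff ℝ 1 G)
    (hf : ContDiff ℝ 2 f) (x v : E) :
    fderiv ℝ (lagrangian A G f) x v =
      ⟪fderiv ℝ (∇ f) x v, A (∇ f x)⟫ - deriv G (f x) * ⟪∇ f x, v⟫ := by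
  have hgrad : HasFDerivAt (∇ f) (fderiv ℝ (∇ f) x) x :=
    ((contDiff_gradient (n := 1) hf).differentiable one_ne_zero x).hasFDerivAt
  have hGf : HasFDerivAt (fun y ↦ G (f y)) (deriv G (f x) • fderiv ℝ f x) x :=
    (hG.differentiable one_ne_zero (f x)).hasDerivAt.comp_hasFDerivAt x
      (hf.differentiable two_ne_zero x).hasFDerivAt
  have hL : HasFDerivAt (lagrangian A G f) _ x :=
    (((A.hasFDerivAt.comp x hgrad).inner ℝ hgrad).mul_const 2⁻¹).sub hGf
  have hsymm : ⟪A (fderiv ℝ (∇ f) x v), ∇ f x⟫ = ⟪fderiv ℝ (∇ f) x v, A (∇ f x)⟫ := hA _ _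
  rw [hL.fderiv]
  simp only [Function.comp_apply, sub_apply, smul_apply, ContinuousLinearMap.comp_apply,
    ContinuousLinearMap.prod_apply, fderivInnerCLM_apply, real_inner_comm (fderiv ℝ (∇ f) x v),
    hsymm, smul_eq_mul, inner_gradient_left]
  ring

lemma divergence_stressTensor (hA : A.toLinearMap.IsSymmetric) (hG : ContDiff ℝ 1 G)
    (hf : ContDiff ℝ 2 f) (v x : E) :
    divergence (stressTensor A G f v) x =
      ⟪∇ f x, v⟫ * (divergence (fun y ↦ A (∇ f y)) x + deriv G (f x)) := by
  have hgrad : DifferentiableAt ℝ (∇ f) x :=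
    (contDiff_gradient (n := 1) hf).differentiable one_ne_zero x
  have hAgrad : DifferentiableAt ℝ (fun y ↦ A (∇ f y)) x := A.differentiableAt.comp x hgrad
  have hDv : DifferentiableAt ℝ (fun y ↦ ⟪∇ f y, v⟫) x :=
    hgrad.inner ℝ (differentiableAt_const v)
  have hL : DifferentiableAt ℝ (lagrangian A G f) x :=
    (contDiff_lagrangian A hG hf).differentiable one_ne_zero x
  have hv : DifferentiableAt ℝ (fun _ : E ↦ v) x := differentiableAt_const v
  have hDv_apply : fderiv ℝ (fun y ↦ ⟪∇ f y, v⟫) x (A (∇ f x)) =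
      ⟪fderiv ℝ (∇ f) x v, A (∇ f x)⟫ := by
    simp_rw [inner_gradient_left]
    rw [← inner_fderiv_gradient hf, inner_fderiv_gradient_comm hf]
  have hdiv_const : divergence (fun _ : E ↦ v) x = 0 := by simp [divergence]
  calc divergence (stressTensor A G f v) x
      = divergence (fun y ↦ ⟪∇ f y, v⟫ • A (∇ f y)) x
          - divergence (fun y ↦ lagrangian A G f y • v) x :=
        divergence_sub (hDv.smul hAgrad) (hL.smul hv)
    _ = ⟪∇ f x, v⟫ * divergence (fun y ↦ A (∇ f y)) x + ⟪fderiv ℝ (∇ f) x v, A (∇ f x)⟫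
          - (⟪fderiv ℝ (∇ f) x v, A (∇ f x)⟫ - deriv G (f x) * ⟪∇ f x, v⟫) := by
        rw [divergence_smul hDv hAgrad, divergence_smul hL hv, hDv_apply, hdiv_const, mul_zero,
          zero_add, fderiv_lagrangian_apply hA hG hf]
    _ = ⟪∇ f x, v⟫ * (divergence (fun y ↦ A (∇ f y)) x + deriv G (f x)) := by ring

variable [MeasurableSpace E] {μ : Measure E}

/-- `f` is a classical solution of `div (A ∇f) + G'(f) = 0` for which both terms of the Lagrangian
are integrable. -/
structure IsFiniteEnergySolution (μ : Measure E) (A : E →L[ℝ] E) (G : ℝ → ℝ) (f : E → ℝ) :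
    Prop where
  contDiff : ContDiff ℝ 2 f
  integrable_norm_gradient_sq : Integrable (fun x ↦ ‖∇ f x‖ ^ 2) μ
  integrable_potential : Integrable (fun x ↦ G (f x)) μ
  divergence_add_deriv (x : E) : divergence (fun y ↦ A (∇ f y)) x + deriv G (f x) = 0

namespace IsFiniteEnergySolution

lemma continuous_gradient (h : IsFiniteEnergySolution μ A G f) : Continuous (∇ f) :=
  (contDiff_gradient (n := 1) h.contDiff).continuous

variable [BorelSpace E]

lemma integrable_lagrangian (h : IsFiniteEnergySolution μ A G f) :
    Integrable (lagrangian A G f) μ := by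
  have hgrad := h.continuous_gradient
  refine (Integrable.div_const ?_ 2).sub h.integrable_potential
  refine (h.integrable_norm_gradient_sq.const_mul ‖A‖).mono'
    ((A.continuous.comp hgrad).inner hgrad).aestronglyMeasurable (.of_forall fun x ↦ ?_)
  calc ‖⟪A (∇ f x), ∇ f x⟫‖ ≤ ‖A (∇ f x)‖ * ‖∇ f x‖ := norm_inner_le_norm _ _
    _ ≤ (‖A‖ * ‖∇ f x‖) * ‖∇ f x‖ := by gcongr; exact A.le_opNorm _
    _ = ‖A‖ * ‖∇ f x‖ ^ 2 := by ring

lemma integrable_stressTensor (h : IsFiniteEnergySolution μ A G f) (v : E) :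
    Integrable (stressTensor A G f v) μ := by
  have hgrad := h.continuous_gradient
  refine Integrable.sub ?_ (h.integrable_lagrangian.smul_const v)
  refine (h.integrable_norm_gradient_sq.const_mul (‖v‖ * ‖A‖)).mono'
    ((hgrad.inner continuous_const).smul (A.continuous.comp hgrad)).aestronglyMeasurable
    (.of_forall fun x ↦ ?_)
  calc ‖⟪∇ f x, v⟫ • A (∇ f x)‖ = ‖⟪∇ f x, v⟫‖ * ‖A (∇ f x)‖ := norm_smul _ _
    _ ≤ (‖∇ f x‖ * ‖v‖) * (‖A‖ * ‖∇ f x‖) := by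
        gcongr
        exacts [norm_inner_le_norm _ _, A.le_opNorm _]
    _ = ‖v‖ * ‖A‖ * ‖∇ f x‖ ^ 2 := by ring

lemma integrable_inner_gradient_sq (h : IsFiniteEnergySolution μ A G f) (v : E) :
    Integrable (fun x ↦ ⟪∇ f x, v⟫ ^ 2) μ := by
  refine (h.integrable_norm_gradient_sq.mul_const (‖v‖ ^ 2)).mono'
    ((h.continuous_gradient.inner continuous_const).pow 2).aestronglyMeasurable
    (.of_forall fun x ↦ ?_)
  rw [norm_pow, ← mul_pow]
  gcongr
  exact norm_inner_le_norm _ _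

variable [μ.IsAddHaarMeasure]

theorem integral_inner_gradient_sq (h : IsFiniteEnergySolution μ A G f)
    (hA : A.toLinearMap.IsSymmetric) (hG : ContDiff ℝ 1 G) (w : E) :
    ∫ x, ⟪∇ f x, A w⟫ ^ 2 ∂μ = ⟪A w, w⟫ * ∫ x, lagrangian A G f x ∂μ := by
  have hstress : ∫ x, stressTensor A G f (A w) x ∂μ = 0 := by
    refine integral_eq_zero_of_divergence_eq_zero (contDiff_stressTensor A hG h.contDiff _)
      (h.integrable_stressTensor _) fun x ↦ ?_
    rw [divergence_stressTensor hA hG h.contDiff, h.divergence_add_deriv, mul_zero]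
  have hinner (x : E) : ⟪w, stressTensor A G f (A w) x⟫ =
      ⟪∇ f x, A w⟫ ^ 2 - ⟪A w, w⟫ * lagrangian A G f x := by
    have hsymm : ⟪w, A (∇ f x)⟫ = ⟪∇ f x, A w⟫ :=
      (real_inner_comm _ _).trans (hA _ _)
    rw [stressTensor, inner_sub_right, inner_smul_right, inner_smul_right, hsymm,
      real_inner_comm w]
    ring
  have hzero := integral_inner (𝕜 := ℝ) (h.integrable_stressTensor (A w)) w
  simp_rw [hstress, inner_zero_right, hinner] at hzero
  rwa [integral_sub (h.integrable_inner_gradient_sq _) (h.integrable_lagrangian.const_mul _),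
    integral_const_mul, sub_eq_zero] at hzero

lemma integral_lagrangian_eq_zero (h : IsFiniteEnergySolution μ A G f)
    (hA : A.toLinearMap.IsSymmetric) (hG : ContDiff ℝ 1 G) {v w : E} (hv : ⟪A v, v⟫ < 0)
    (hw : 0 < ⟪A w, w⟫) : ∫ x, lagrangian A G f x ∂μ = 0 := by
  have hnonneg (u : E) : 0 ≤ ⟪A u, u⟫ * ∫ x, lagrangian A G f x ∂μ := by
    rw [← h.integral_inner_gradient_sq hA hG]
    exact integral_nonneg fun x ↦ sq_nonneg _
  exact le_antisymm (nonpos_of_mul_nonneg_right (hnonneg v) hv)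
    (nonneg_of_mul_nonneg_right (hnonneg w) hw)

lemma inner_gradient_eq_zero (h : IsFiniteEnergySolution μ A G f)
    (hA : A.toLinearMap.IsSymmetric) (hG : ContDiff ℝ 1 G) {v w : E} (hv : ⟪A v, v⟫ < 0)
    (hw : 0 < ⟪A w, w⟫) (x u : E) : ⟪∇ f x, A u⟫ = 0 := by
  have hint : ∫ x, ⟪∇ f x, A u⟫ ^ 2 ∂μ = 0 := by
    rw [h.integral_inner_gradient_sq hA hG, h.integral_lagrangian_eq_zero hA hG hv hw, mul_zero]
  have hcont : Continuous fun x ↦ ⟪∇ f x, A u⟫ ^ 2 :=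
    (h.continuous_gradient.inner continuous_const).pow 2
  have hae : (fun x ↦ ⟪∇ f x, A u⟫ ^ 2) =ᵐ[μ] 0 :=
    (integral_eq_zero_iff_of_nonneg (fun x ↦ sq_nonneg _)
      (h.integrable_inner_gradient_sq (A u))).mp hint
  have hsq : ⟪∇ f x, A u⟫ ^ 2 = 0 :=
    congrFun ((hcont.ae_eq_iff_eq μ continuous_zero).mp hae) x
  exact pow_eq_zero_iff two_ne_zero |>.mp hsq

lemma gradient_eq_zero (h : IsFiniteEnergySolution μ A G f)
    (hA : A.toLinearMap.IsSymmetric) (hA_surj : Function.Surjective A) (hG : ContDiff ℝ 1 G)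
    {v w : E} (hv : ⟪A v, v⟫ < 0) (hw : 0 < ⟪A w, w⟫) (x : E) : ∇ f x = 0 := by
  obtain ⟨u, hu⟩ := hA_surj (∇ f x)
  rw [← inner_self_eq_zero (𝕜 := ℝ)]
  simpa only [hu] using h.inner_gradient_eq_zero hA hG hv hw x u

theorem eq_zero (h : IsFiniteEnergySolution μ A G f)
    (hA : A.toLinearMap.IsSymmetric) (hA_surj : Function.Surjective A) (hG : ContDiff ℝ 1 G)
    (hG_zero : ∀ u, G u = 0 → u = 0) {v w : E} (hv : ⟪A v, v⟫ < 0) (hw : 0 < ⟪A w, w⟫)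
    (x : E) : f x = 0 := by
  have : Nontrivial E := ⟨v, 0, by rintro rfl; simp at hv⟩
  have hfderiv (y : E) : fderiv ℝ f y = 0 := by
    rw [← toDual_gradient, h.gradient_eq_zero hA hA_surj hG hv hw, map_zero]
  have hconst (y : E) : f y = f x :=
    is_const_of_fderiv_eq_zero (h.contDiff.differentiable two_ne_zero) hfderiv y x
  have hint : Integrable (fun _ ↦ G (f x)) μ := by
    simpa only [hconst] using h.integrable_potential
  refine hG_zero _ ((integrable_const_iff.mp hint).resolve_right fun hfin ↦ ?_)
  exact (measure_lt_top μ univ).ne (measure_univ_of_isAddLeftInvariant μ)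

end IsFiniteEnergySolution

end Pohozaev

section TravelingWave

open scoped Gradient RealInnerProductSpace

variable {E : Type*} [NormedAddCommGroup E] [InnerProductSpace ℝ E]

/-- The operator `A = id - β ⊗ β`. A function `f` is the profile of a wave `u(t, x) = f(x - tβ)`
with `∂ₜ²u = Δu + G'(u)` exactly when `div (A ∇f) + G'(f) = 0`. -/
def travelingWaveOperator (β : E) : E →L[ℝ] E :=
  ContinuousLinearMap.id ℝ E - (innerSL ℝ β).smulRight β

lemma travelingWaveOperator_apply (β v : E) : travelingWaveOperator β v = v - ⟪β, v⟫ • β := by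
  simp [travelingWaveOperator]

lemma isSymmetric_travelingWaveOperator (β : E) :
    (travelingWaveOperator β).toLinearMap.IsSymmetric := fun v w ↦ by
  simp only [ContinuousLinearMap.coe_coe, travelingWaveOperator_apply, inner_sub_left,
    inner_sub_right, real_inner_smul_left, real_inner_smul_right, real_inner_comm v β]
  ring

lemma travelingWaveOperator_self (β : E) : travelingWaveOperator β β = (1 - ‖β‖ ^ 2) • β := by
  rw [travelingWaveOperator_apply, real_inner_self_eq_norm_sq, sub_smul, one_smul]

lemma inner_travelingWaveOperator_self_neg {β : E} (hβ : 1 < ‖β‖) :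
    ⟪travelingWaveOperator β β, β⟫ < 0 := by
  rw [travelingWaveOperator_self, real_inner_smul_left, real_inner_self_eq_norm_sq]
  exact mul_neg_of_neg_of_pos (by nlinarith) (by positivity)

lemma surjective_travelingWaveOperator [FiniteDimensional ℝ E] {β : E} (hβ : ‖β‖ ≠ 1) :
    Function.Surjective (travelingWaveOperator β) := by
  refine LinearMap.surjective_of_injective (f := (travelingWaveOperator β).toLinearMap) ?_
  refine (injective_iff_map_eq_zero _).mpr fun v hv ↦ ?_
  have hv_eq : v = ⟪β, v⟫ • β := by
    rw [← sub_eq_zero, ← travelingWaveOperator_apply]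
    exact hv
  have hsmul : (1 - ‖β‖ ^ 2) • v = 0 := by
    rw [hv_eq, smul_comm, ← travelingWaveOperator_self, ← map_smul, ← hv_eq]
    exact hv
  refine (smul_eq_zero.mp hsmul).resolve_left fun h ↦ hβ ?_
  exact (pow_eq_one_iff_of_nonneg (norm_nonneg β) two_ne_zero).mp (sub_eq_zero.mp h).symm

lemma exists_inner_travelingWaveOperator_pos [FiniteDimensional ℝ E]
    (hE : 2 ≤ Module.finrank ℝ E) (β : E) : ∃ v, 0 < ⟪travelingWaveOperator β v, v⟫ := by
  have horth : (ℝ ∙ β)ᗮ ≠ ⊥ := fun hbot ↦ by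
    have hadd := (ℝ ∙ β).finrank_add_finrank_orthogonal
    have hspan := finrank_span_le_card (R := ℝ) ({β} : Set E)
    rw [hbot, finrank_bot] at hadd
    rw [toFinset_singleton, Finset.card_singleton] at hspan
    omega
  obtain ⟨v, hv, hv0⟩ := Submodule.exists_mem_ne_zero_of_ne_bot horth
  refine ⟨v, ?_⟩
  rw [travelingWaveOperator_apply, Submodule.mem_orthogonal_singleton_iff_inner_right.mp hv,
    zero_smul, sub_zero]
  exact real_inner_self_pos.mpr hv0

theorem IsFiniteEnergySolution.eq_zero_of_one_lt_norm [FiniteDimensional ℝ E] [MeasurableSpace E]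
    [BorelSpace E] {μ : Measure E} [μ.IsAddHaarMeasure] (hE : 2 ≤ Module.finrank ℝ E) {β : E}
    (hβ : 1 < ‖β‖) {G : ℝ → ℝ} (hG : ContDiff ℝ 1 G) (hG_zero : ∀ u, G u = 0 → u = 0) {f : E → ℝ}
    (h : IsFiniteEnergySolution μ (travelingWaveOperator β) G f) (x : E) : f x = 0 := by
  obtain ⟨w, hw⟩ := exists_inner_travelingWaveOperator_pos hE β
  exact h.eq_zero (isSymmetric_travelingWaveOperator β) (surjective_travelingWaveOperator hβ.ne')
    hG hG_zero (inner_travelingWaveOperator_self_neg hβ) hw x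

lemma divergence_travelingWaveOperator_gradient [FiniteDimensional ℝ E] (β : E) {f : E → ℝ}
    (hf : ContDiff ℝ 2 f) (x : E) :
    divergence (fun y ↦ travelingWaveOperator β (∇ f y)) x =
      divergence (∇ f) x - ⟪β, fderiv ℝ (∇ f) x β⟫ := by
  have hgrad : DifferentiableAt ℝ (∇ f) x :=
    (contDiff_gradient (n := 1) hf).differentiable one_ne_zero x
  have hβ : DifferentiableAt ℝ (fun y ↦ ⟪β, ∇ f y⟫) x := (differentiableAt_const β).inner ℝ hgrad
  simp_rw [travelingWaveOperator_apply]
  rw [divergence_sub hgrad (hβ.smul_const β), divergence_smul hβ (differentiableAt_const β),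
    fderiv_inner_apply ℝ (differentiableAt_const β) hgrad]
  simp [divergence]

end TravelingWave

section Coordinates

open scoped Gradient RealInnerProductSpace

variable {N : ℕ} {f : EuclideanSpace ℝ (Fin N) → ℝ}

lemma inner_single_fderiv_gradient_single (hf : ContDiff ℝ 2 f) (i : Fin N) (ℓ : ℝ)
    (x : EuclideanSpace ℝ (Fin N)) :
    ⟪EuclideanSpace.single i ℓ, fderiv ℝ (∇ f) x (EuclideanSpace.single i ℓ)⟫ =
      ℓ ^ 2 * d2 f i x := by
  have hsingle : EuclideanSpace.single i ℓ = ℓ • EuclideanSpace.single i (1 : ℝ) := by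
    ext j
    simp
  rw [hsingle, map_smul, real_inner_smul_left, real_inner_smul_right, real_inner_comm,
    inner_fderiv_gradient hf, d2]
  ring

lemma divergence_gradient_eq_sum_d2 (hf : ContDiff ℝ 2 f) (x : EuclideanSpace ℝ (Fin N)) :
    divergence (∇ f) x = ∑ j, d2 f j x := by
  rw [divergence, LinearMap.trace_eq_sum_inner _ (EuclideanSpace.basisFun (Fin N) ℝ)]
  simp only [EuclideanSpace.basisFun_apply, ContinuousLinearMap.coe_coe,
    inner_single_fderiv_gradient_single hf, one_pow, one_mul]

lemma divergence_travelingWaveOperator_single (hf : ContDiff ℝ 2 f) (i : Fin N) (ℓ : ℝ)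
    (x : EuclideanSpace ℝ (Fin N)) :
    divergence (fun y ↦ travelingWaveOperator (EuclideanSpace.single i ℓ) (∇ f y)) x =
      (1 - ℓ ^ 2) * d2 f i x + ∑ j ∈ Finset.univ.erase i, d2 f j x := by
  rw [divergence_travelingWaveOperator_gradient _ hf, divergence_gradient_eq_sum_d2 hf,
    inner_single_fderiv_gradient_single hf, ← Finset.add_sum_erase _ _ (Finset.mem_univ i)]
  ring

end Coordinates

section CriticalExponent

/-- The antiderivative `|u|^q / q`, with `q = 2N / (N - 2)`, of the energy-critical nonlinearity in
dimension `N`. -/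
def criticalPotential (N u : ℝ) : ℝ :=
  (2 * N / (N - 2))⁻¹ * |u| ^ (2 * N / (N - 2))

variable {N : ℝ}

lemma hasDerivAt_criticalPotential (hN : 2 < N) (u : ℝ) :
    HasDerivAt (criticalPotential N) (|u| ^ (4 / (N - 2)) * u) u := by
  have hN2 : 0 < N - 2 := sub_pos.mpr hN
  have hq : 1 < 2 * N / (N - 2) := by
    rw [one_lt_div hN2]
    linarith
  have hq2 : 2 * N / (N - 2) - 2 = 4 / (N - 2) := by
    field_simp
    ring
  have hpow := (hasDerivAt_abs_rpow u hq).const_mul (2 * N / (N - 2))⁻¹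
  rwa [hq2, ← mul_assoc, ← mul_assoc, inv_mul_cancel₀ (by positivity), one_mul] at hpow

lemma eq_zero_of_criticalPotential_eq_zero (hN : 2 < N) {u : ℝ} (hu : criticalPotential N u = 0) :
    u = 0 := by
  have hq : 2 * N / (N - 2) ≠ 0 := (div_pos (by linarith) (sub_pos.mpr hN)).ne'
  have hpow := (mul_eq_zero.mp hu).resolve_left (inv_ne_zero hq)
  exact abs_eq_zero.mp ((Real.rpow_eq_zero (abs_nonneg u) hq).mp hpow)

lemma continuous_abs_rpow_mul_self {p : ℝ} (hp : 0 ≤ p) : Continuous fun u : ℝ ↦ |u| ^ p * u :=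
  (continuous_abs.rpow_const fun _ ↦ .inr hp).mul continuous_id

end CriticalExponent

theorem stmt9_general (N : ℕ) (hN : 2 ≤ N) (ℓ : ℝ) (hℓ : 1 < ℓ ^ 2) {G g : ℝ → ℝ}
    (hG : ∀ u, HasDerivAt G (g u) u) (hg : Continuous g) (hG_zero : ∀ u, G u = 0 → u = 0)
    (f : EuclideanSpace ℝ (Fin N) → ℝ)
    (hf : ContDiff ℝ 2 f)
    (hgrad : Integrable (fun x => ‖gradient f x‖ ^ 2))
    (hGf : Integrable (fun x => G (f x)))
    (heq : ∀ x, (1 - ℓ ^ 2) * d2 f ⟨0, by omega⟩ x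
        + (∑ j ∈ Finset.univ.erase (⟨0, by omega⟩ : Fin N), d2 f j x)
        + g (f x) = 0) :
    ∀ x, f x = 0 := by
  have hG_deriv : deriv G = g := funext fun u ↦ (hG u).deriv
  have hG_contDiff : ContDiff ℝ 1 G :=
    contDiff_one_iff_deriv.mpr ⟨fun u ↦ (hG u).differentiableAt, hG_deriv ▸ hg⟩
  set β : EuclideanSpace ℝ (Fin N) := EuclideanSpace.single ⟨0, by omega⟩ ℓ
  have hβ : 1 < ‖β‖ := by
    rwa [PiLp.norm_single, ← one_lt_sq_iff₀ (norm_nonneg ℓ), Real.norm_eq_abs, sq_abs]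
  have hsol : IsFiniteEnergySolution volume (travelingWaveOperator β) G f :=
    { contDiff := hf
      integrable_norm_gradient_sq := hgrad
      integrable_potential := hGf
      divergence_add_deriv := fun x ↦ by
        rw [divergence_travelingWaveOperator_single hf, hG_deriv, heq x] }
  exact hsol.eq_zero_of_one_lt_norm (by simpa using hN) hβ hG_contDiff hG_zero

/-- Case `ℓ² > 1` of Lemma 2.5: no nonzero finite-energy traveling-wave profile with
speed greater than one. -/
theorem stmt9 (N : ℕ) (hN : N = 3 ∨ N = 4 ∨ N = 5)
    (ℓ : ℝ) (hℓ : 1 < ℓ ^ 2)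
    (f : EuclideanSpace ℝ (Fin N) → ℝ)
    (hf : ContDiff ℝ 2 f)
    (hgrad : Integrable (fun x => ‖gradient f x‖ ^ 2))
    (hLp : Integrable (fun x => |f x| ^ (2 * (N : ℝ) / ((N : ℝ) - 2))))
    (heq : ∀ x, (1 - ℓ ^ 2) * d2 f ⟨0, by omega⟩ x
        + (∑ j ∈ Finset.univ.erase (⟨0, by omega⟩ : Fin N), d2 f j x)
        + |f x| ^ (4 / ((N : ℝ) - 2)) * f x = 0) :
    ∀ x, f x = 0 := by
  have hN2 : 2 < (N : ℝ) := by exact_mod_cast (by omega : 2 < N)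
  exact stmt9_general N (by omega) ℓ hℓ (hasDerivAt_criticalPotential hN2)
    (continuous_abs_rpow_mul_self (div_nonneg zero_le_four (sub_nonneg.mpr hN2.le)))
    (fun _ ↦ eq_zero_of_criticalPotential_eq_zero hN2) f hf hgrad (hLp.const_mul _) heq

end
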